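/- arXiv:0803.4079 — 2 statements merged into one kernel-verified Lean document; each statement's English description precedes it below -/
import Mathlib

section
/- For every integer n ≥ 2, the group (ℤ/2ℤ)^n is sequentially ternary if and only if n is neither 3 nor 4. -/
/-!
The vectors in positions `4j + 1, 4j + 2, 4j + 3` of a ternary permutation form disjoint lines, each
with sum zero, and all the vectors together have sum zero; hence so do the vectors in positions
divisible by `4`. In dimension three position `4` is the only such position, which is absurd. In
dimension four, let `w₀, …, w₆` be the vectors in positions `1, 3, …, 13`; the relation becomes
`w₁ + ⋯ + w₆ = 0`. The lines `{w₀, w₀ + w₁, w₁}` and `{w₂, w₂ + w₃, w₃}` are disjoint, so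
`w₀, …, w₃` may be taken to be the standard basis, and then no choice of `w₄` and `w₅` keeps the
entries distinct.

For existence, a ternary permutation of `V` lifts to one of `V × 𝔽₄` when `8 ≤ |V|`. Choose a
ternary sequence in `𝔽₄ˣ` as long as the permutation of `V`. For each `t ∈ 𝔽₄`, pairing the
permutation with `t` times this sequence is ternary again, and the four sequences obtained cover
`(V ∖ 0) × 𝔽₄`. The three missing elements `(0, c)` join them end to end, provided that two of
them have their first two entries exchanged. This reduces everything to dimensions two, five and
six, where explicit permutations exist.
-/

def SeqTernary (n : ℕ) : Prop :=
  ∃ v : ℕ → (Fin n → ZMod 2),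
    Set.BijOn v (Set.Icc 1 (2 ^ n - 1)) {x | x ≠ 0} ∧
    ∀ i : ℕ, 2 ≤ i → i ≤ 2 ^ n - 2 → Even i → v (i - 1) + v i + v (i + 1) = 0

theorem sum_univ_pi_eq_zero {ι G : Type*} [Fintype ι] [DecidableEq ι] [Nontrivial ι]
    [AddCommGroup G] [Fintype G] : ∑ x : ι → G, x = 0 := by
  funext i
  obtain ⟨j, hj⟩ := exists_ne i
  have card_dvd : Fintype.card G ∣ Fintype.card ({k // k ≠ i} → G) := by
    rw [Fintype.card_fun]
    exact dvd_pow_self _ (Fintype.card_pos_iff.2 ⟨⟨j, hj⟩⟩).ne'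
  obtain ⟨m, hm⟩ := card_dvd
  calc (∑ x : ι → G, x) i = ∑ x : ι → G, x i := Finset.sum_apply ..
    _ = ∑ p : G × ({k // k ≠ i} → G), p.1 := (Equiv.funSplitAt i G).sum_comp Prod.fst
    _ = ∑ g : G, Fintype.card ({k // k ≠ i} → G) • g := by
      simp only [Fintype.sum_prod_type, Finset.sum_const, Finset.card_univ]
    _ = 0 := Finset.sum_eq_zero fun g _ => by rw [hm, mul_nsmul, card_nsmul_eq_zero, nsmul_zero]

theorem sum_eq_zero_of_bijOn_ne_zero {α ι G : Type*} [Finite ι] [Nontrivial ι]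
    [AddCommGroup G] [Finite G] {s : Finset α} {v : α → ι → G}
    (hv : Set.BijOn v s {x | x ≠ 0}) : ∑ i ∈ s, v i = 0 := by
  classical
  have := Fintype.ofFinite ι
  have := Fintype.ofFinite G
  rw [← sum_univ_pi_eq_zero (ι := ι) (G := G),
    ← Finset.sum_erase Finset.univ (a := 0) (f := fun x => x) rfl]
  exact Finset.sum_nbij v (fun i hi => by simpa using hv.mapsTo hi) hv.injOn
    (fun x hx => hv.surjOn (by simpa using hx)) fun _ _ => rfl

theorem sum_range_four_mul {M : Type*} [AddCommMonoid M] (f : ℕ → M) (m : ℕ) :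
    ∑ i ∈ Finset.range (4 * m), f i =
      ∑ j ∈ Finset.range m,
        (f (4 * j) + (f (4 * j + 1) + f (4 * j + 2) + f (4 * j + 3))) := by
  induction m with
  | zero => rfl
  | succ m ih =>
    rw [Finset.sum_range_succ, ← ih, Nat.mul_succ]
    simp only [Finset.sum_range_succ, add_assoc]

theorem sum_Ico_four_mul_eq_zero {n : ℕ} {v : ℕ → Fin (n + 2) → ZMod 2}
    (hv : Set.BijOn v (Set.Icc 1 (2 ^ (n + 2) - 1)) {x | x ≠ 0})
    (ht : ∀ i, 2 ≤ i → i ≤ 2 ^ (n + 2) - 2 → Even i → v (i - 1) + v i + v (i + 1) = 0) :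
    ∑ j ∈ Finset.Ico 1 (2 ^ n), v (4 * j) = 0 := by
  have hpow : 2 ^ (n + 2) = 4 * 2 ^ n := by ring
  rw [hpow] at hv ht
  have hpos : 0 < 2 ^ n := by positivity
  have Ico_eq_Icc : Set.Ico 1 (4 * 2 ^ n) = Set.Icc 1 (4 * 2 ^ n - 1) := by
    ext i
    simp only [Set.mem_Ico, Set.mem_Icc]
    omega
  have total : ∑ i ∈ Finset.Ico 1 (4 * 2 ^ n), v i = 0 :=
    sum_eq_zero_of_bijOn_ne_zero (by rwa [Finset.coe_Ico, Ico_eq_Icc])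
  have line : ∀ j ∈ Finset.range (2 ^ n),
      v (4 * j) + (v (4 * j + 1) + v (4 * j + 2) + v (4 * j + 3)) = v (4 * j) := fun j hj => by
    rw [Finset.mem_range] at hj
    have := ht (4 * j + 2) (by omega) (by omega) ⟨2 * j + 1, by ring⟩
    rw [add_eq_left]
    exact this
  have range_sum : v 0 + ∑ j ∈ Finset.Ico 1 (2 ^ n), v (4 * j) = v 0 + 0 := by
    rw [← total, ← Finset.sum_range_eq_add_Ico v (by omega), sum_range_four_mul,
      Finset.sum_congr rfl line, Finset.sum_range_eq_add_Ico _ hpos, mul_zero]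
  exact add_left_cancel range_sum

theorem not_seqTernary_three : ¬ SeqTernary 3 := by
  rintro ⟨v, hv, ht⟩
  have v_four : v 4 = 0 := by simpa using sum_Ico_four_mul_eq_zero (n := 1) hv ht
  exact hv.mapsTo (show 4 ∈ Set.Icc 1 (2 ^ 3 - 1) by simp) v_four

section DimensionFour

variable {V : Type*} [AddCommGroup V] [Module (ZMod 2) V]

theorem linearIndependent_of_disjoint_lines {p q r s : V}
    (h : [0, p, p + q, q, r, r + s, s].Nodup) : LinearIndependent (ZMod 2) ![p, q, r, s] := by
  have zero_or_one : ∀ c : ZMod 2, c = 0 ∨ c = 1 := by decide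
  have hp := ZModModule.add_self p
  have hq := ZModModule.add_self q
  have hr := ZModModule.add_self r
  have hs := ZModModule.add_self s
  simp only [List.nodup_cons, List.mem_cons, not_or] at h
  rw [Fintype.linearIndependent_iff]
  intro g hg
  simp only [Fin.sum_univ_four, Matrix.cons_val] at hg
  rcases zero_or_one (g 0) with h0 | h0 <;> rcases zero_or_one (g 1) with h1 | h1 <;>
    rcases zero_or_one (g 2) with h2 | h2 <;> rcases zero_or_one (g 3) with h3 | h3 <;>
    simp only [h0, h1, h2, h3, zero_smul, one_smul, zero_add, add_zero] at hg
  · intro i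
    fin_cases i <;> assumption
  -- The other coefficients give a relation that equates two entries of the list.
  all_goals grind

theorem not_nodup_of_single_basis (x y : Fin 4 → ZMod 2) :
    letI e (i : Fin 4) : Fin 4 → ZMod 2 := Pi.single i 1
    letI z := e 1 + e 2 + e 3 + x + y
    ¬ [0, e 0, e 0 + e 1, e 1, e 1 + e 2, e 2, e 2 + e 3, e 3, e 3 + x, x, x + y, y, y + z,
      z].Nodup := by
  decide +kernel +revert

theorem sum_ne_zero_of_nodup (hV : Module.finrank (ZMod 2) V = 4) {w₀ w₁ w₂ w₃ w₄ w₅ w₆ : V}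
    (h : [0, w₀, w₀ + w₁, w₁, w₁ + w₂, w₂, w₂ + w₃, w₃, w₃ + w₄, w₄, w₄ + w₅, w₅, w₅ + w₆,
      w₆].Nodup) :
    w₁ + w₂ + w₃ + w₄ + w₅ + w₆ ≠ 0 := by
  intro hsum
  have indep := linearIndependent_of_disjoint_lines (h.sublist (by simp) :
    [0, w₀, w₀ + w₁, w₁, w₂, w₂ + w₃, w₃].Nodup)
  set b := basisOfLinearIndependentOfCardEqFinrank indep (by simp [hV])
  have image_basis (i : Fin 4) : b.equivFun (![w₀, w₁, w₂, w₃] i) = Pi.single i 1 := by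
    rw [← show b i = ![w₀, w₁, w₂, w₃] i by simp [b], Module.Basis.equivFun_apply,
      b.repr_self, Finsupp.single_eq_pi_single]
  have hw₆ : w₆ = w₁ + w₂ + w₃ + w₄ + w₅ := by
    rw [← sub_eq_zero, ZModModule.sub_eq_add, ← hsum, add_comm]
  apply not_nodup_of_single_basis (b.equivFun w₄) (b.equivFun w₅)
  have := h.map b.equivFun.injective
  simpa [hw₆, ← image_basis] using this

end DimensionFour

theorem not_seqTernary_four : ¬ SeqTernary 4 := by
  rintro ⟨v, hv, ht⟩
  have even_entry (k : ℕ) (hk : k < 7 := by decide) :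
      v (2 * k + 1) + v (2 * k + 3) = v (2 * k + 2) := by
    have := ht (2 * k + 2) (by omega) (by norm_num; omega) ⟨k + 1, by ring⟩
    rwa [add_right_comm, ← ZModModule.sub_eq_add, sub_eq_zero] at this
  have nodup : (0 :: (List.range' 1 13).map v).Nodup := by
    have mem_Icc : ∀ i ∈ List.range' 1 13, i ∈ Set.Icc 1 (2 ^ 4 - 1) := by decide
    refine List.nodup_cons.2 ⟨fun h => ?_,
      List.Nodup.map_on (fun i hi j hj => hv.injOn (mem_Icc i hi) (mem_Icc j hj)) List.nodup_range'⟩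
    obtain ⟨i, hi, hvi⟩ := List.mem_map.1 h
    exact hv.mapsTo (mem_Icc i hi) hvi
  have sum_odd : v 3 + v 5 + v 7 + v 9 + v 11 + v 13 = v 4 + v 8 + v 12 := by
    rw [← even_entry 1, ← even_entry 3, ← even_entry 5]
    simp only [add_assoc]
  refine sum_ne_zero_of_nodup (w₀ := v 1) (by simp)
    (by rwa [even_entry 0, even_entry 1, even_entry 2, even_entry 3, even_entry 4, even_entry 5])
    (sum_odd.trans ?_)
  simpa [Finset.sum_Ico_succ_top] using sum_Ico_four_mul_eq_zero (n := 2) hv ht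

/-- `TernaryPath x y l` says that `l` is a ternary sequence from `x` to `y`: it has odd length, and
each entry in an even position, counted from `1`, has sum zero with its two neighbours. It is the
notion that is glued and lifted in the construction, so the entries need not be distinct. -/
inductive TernaryPath {V : Type*} [AddCommMonoid V] : V → V → List V → Prop
  | single (x : V) : TernaryPath x x [x]
  | cons {x b z y : V} {l : List V} (h : x + b + z = 0) (hl : TernaryPath z y l) :
    TernaryPath x y (x :: b :: l)

namespace TernaryPath

variable {V W : Type*} [AddCommMonoid V] [AddCommMonoid W] {x y x' y' b : V} {l l' : List V}

theorem append (hl : TernaryPath x y l) (h : y + b + x' = 0) (hl' : TernaryPath x' y' l') :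
    TernaryPath x y' (l ++ b :: l') := by
  induction hl with
  | single => exact cons h hl'
  | cons h' _ ih => exact cons h' (ih h)

theorem reverse (hl : TernaryPath x y l) : TernaryPath y x l.reverse := by
  induction hl with
  | single x => exact single x
  | @cons x b z y l h _ ih =>
    have h' : z + b + x = 0 := by rw [← h]; abel
    simpa using ih.append h' (single x)

theorem map (f : V →+ W) (hl : TernaryPath x y l) : TernaryPath (f x) (f y) (l.map f) := by
  induction hl with
  | single x => exact single (f x)
  | cons h _ ih => exact cons (by rw [← map_add, ← map_add, h, map_zero]) ih

theorem swap (hl : TernaryPath x y (x :: b :: l)) : TernaryPath b y (b :: x :: l) := by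
  cases hl with
  | cons h hl => exact cons (by rwa [add_comm b x]) hl

theorem zip {u w : W} {m : List W} (hl : TernaryPath x y l) (hm : TernaryPath u w m)
    (length_eq : l.length = m.length) : TernaryPath (x, u) (y, w) (l.zip m) := by
  induction hl generalizing m u with
  | single x =>
    cases hm with
    | single => exact single _
    | cons => simp at length_eq
  | cons h _ ih =>
    cases hm with
    | single => simp at length_eq
    | cons h' hm => exact cons (Prod.ext h h') (ih hm (by simpa using length_eq))

theorem add_add_getD_eq_zero (hl : TernaryPath x y l) (d : V) {i : ℕ}
    (hi : 2 * i + 2 < l.length) :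
    l.getD (2 * i) d + l.getD (2 * i + 1) d + l.getD (2 * i + 2) d = 0 := by
  induction hl generalizing i with
  | single => simp at hi
  | cons h hl ih =>
    obtain _ | i := i
    · cases hl <;> exact h
    · exact ih (by rw [List.length_cons, List.length_cons] at hi; omega)

end TernaryPath

/-- The sequence in `V × K` that lies over `l` and whose second components are the multipliers `m`
applied to `t`. -/
def liftPath {V K : Type*} (l : List V) (m : List (K → K)) (t : K) : List (V × K) :=
  l.zip (m.map fun f => f t)

theorem TernaryPath.liftPath {V K : Type*} [AddCommMonoid V] [AddCommMonoid K] {x y : V}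
    {l : List V} {f g : K → K} {m : List (K → K)} (hl : TernaryPath x y l)
    (hm : TernaryPath f g m) (length_eq : l.length = m.length) (t : K) :
    TernaryPath (x, f t) (y, g t) (liftPath l m t) :=
  hl.zip (hm.map (Pi.evalAddMonoidHom _ t)) (by simpa using length_eq)

theorem exists_mem_liftPath {V K : Type*} {l : List V} {m : List (K → K)}
    (length_eq : l.length = m.length) (surj : ∀ f ∈ m, Function.Surjective f) {z : V} (hz : z ∈ l)
    (c : K) : ∃ t, (z, c) ∈ liftPath l m t := by
  obtain ⟨i, hi, rfl⟩ := List.mem_iff_getElem.1 hz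
  obtain ⟨t, rfl⟩ := surj m[i] (List.getElem_mem _) c
  exact ⟨t, List.mem_iff_getElem.2 ⟨i, by simp [liftPath, ← length_eq, hi], by simp [liftPath]⟩⟩

theorem nodup_of_length_le_card {α : Type*} [Finite α] {l : List α}
    (hl : l.length ≤ Nat.card α) (mem : ∀ x, x ∈ l) : l.Nodup := by
  have get_surjective : Function.Surjective l.get := fun x => List.mem_iff_get.1 (mem x)
  exact List.nodup_iff_injective_get.2
    (get_surjective.bijective_of_nat_card_le (by rwa [Nat.card_fin])).injective

theorem length_add_one_eq_card {α : Type*} {a : α} {l : List α} (nodup : l.Nodup)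
    (mem : ∀ x, x ∈ l ↔ x ≠ a) : l.length + 1 = Nat.card α := by
  classical
  have cons_nodup : (a :: l).Nodup := List.nodup_cons.2 ⟨fun h => (mem a).1 h rfl, nodup⟩
  have mem_cons (x : α) : x ∈ a :: l := by
    rw [List.mem_cons, mem]
    exact em _
  rw [← List.length_cons (a := a), ← Nat.card_fin (a :: l).length]
  exact Nat.card_congr (cons_nodup.getEquivOfForallMemList _ mem_cons)

/-- The coordinate-free form of `SeqTernary`: the nonzero elements of `V` can be listed, without
repetition, as a ternary sequence. -/
def SequentiallyTernary (V : Type*) [AddCommMonoid V] : Prop :=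
  ∃ (x y : V) (l : List V), TernaryPath x y l ∧ l.Nodup ∧ ∀ z, z ∈ l ↔ z ≠ 0

theorem SequentiallyTernary.of_length {V : Type*} [AddCommMonoid V] [Finite V] {x y : V}
    {l : List V} (hl : TernaryPath x y l) (length_eq : l.length + 1 = Nat.card V)
    (mem : ∀ z ≠ 0, z ∈ l) : SequentiallyTernary V := by
  have nodup : (0 :: l).Nodup := nodup_of_length_le_card (by simp [length_eq]) fun z => by
    rw [List.mem_cons, or_iff_not_imp_left]
    exact mem z
  rw [List.nodup_cons] at nodup
  exact ⟨x, y, l, hl, nodup.2, fun z => ⟨fun hz h => nodup.1 (h ▸ hz), mem z⟩⟩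

theorem SequentiallyTernary.congr {V W : Type*} [AddCommMonoid V] [AddCommMonoid W] (e : V ≃+ W)
    (h : SequentiallyTernary V) : SequentiallyTernary W := by
  obtain ⟨x, y, l, hl, nodup, mem⟩ := h
  refine ⟨e x, e y, l.map e, hl.map e.toAddMonoidHom, nodup.map e.injective, fun z => ?_⟩
  rw [← e.apply_symm_apply z, List.mem_map_of_injective e.injective, mem]
  simp

theorem SequentiallyTernary.seqTernary {n : ℕ} (h : SequentiallyTernary (Fin n → ZMod 2)) :
    SeqTernary n := by
  obtain ⟨x, y, l, hl, nodup, mem⟩ := h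
  have length_eq : l.length + 1 = 2 ^ n := by simpa using length_add_one_eq_card nodup mem
  refine ⟨fun i => l.getD (i - 1) 0, ⟨?_, ?_, ?_⟩, ?_⟩
  · rintro i ⟨hi₁, hi₂⟩
    refine (mem (l.getD (i - 1) 0)).1 ?_
    rw [List.getD_eq_getElem l 0 (by omega)]
    exact List.getElem_mem _
  · rintro i ⟨hi₁, hi₂⟩ j ⟨hj₁, hj₂⟩ hij
    dsimp only at hij
    rw [List.getD_eq_getElem l 0 (by omega), List.getD_eq_getElem l 0 (by omega),
      nodup.getElem_inj_iff] at hij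
    omega
  · intro z hz
    obtain ⟨i, hi, rfl⟩ := List.mem_iff_getElem.1 ((mem z).2 hz)
    exact ⟨i + 1, ⟨by omega, by omega⟩, List.getD_eq_getElem l 0 hi⟩
  · rintro i hi₁ hi₂ ⟨k, rfl⟩
    obtain ⟨k, rfl⟩ : ∃ j, k = j + 1 := ⟨k - 1, by omega⟩
    convert hl.add_add_getD_eq_zero 0 (i := k) (by omega) using 4 <;> omega

/-- The additive group of the field with four elements, in the basis `1, ω` with `ω² = 1 + ω`. -/
abbrev F₄ := ZMod 2 × ZMod 2

/-- Multiplication by `ω`; thus `id + mulω` is multiplication by `ω²`. -/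
def mulω : F₄ → F₄ := fun t => (t.2, t.1 + t.2)

/-- A ternary sequence of `4j + 5` multipliers from `{1, ω, ω²}`, starting with `ω` and ending
with `1`. -/
def multipliersTail : ℕ → List (F₄ → F₄)
  | 0 => [mulω, id, id + mulω, mulω, id]
  | j + 1 => mulω :: (id + mulω) :: id :: (id + mulω) :: multipliersTail j

/-- A ternary sequence of `4j + 7` multipliers from `{1, ω, ω²}`, starting with `1, ω²` and ending
with `1`, to be paired with a ternary permutation of a space of order `4j + 8`. -/
def multipliers (j : ℕ) : List (F₄ → F₄) := id :: (id + mulω) :: multipliersTail j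

theorem length_multipliersTail (j : ℕ) : (multipliersTail j).length = 4 * j + 5 := by
  induction j with
  | zero => rfl
  | succ j ih =>
    simp only [multipliersTail, List.length_cons, ih]
    ring

theorem multipliersTail_ternaryPath (j : ℕ) : TernaryPath mulω id (multipliersTail j) := by
  induction j with
  | zero => exact .cons (by decide) (.cons (by decide) (.single id))
  | succ j ih => exact .cons (by decide) (.cons (by decide) ih)

theorem multipliers_ternaryPath (j : ℕ) : TernaryPath id id (multipliers j) :=
  .cons (by decide) (multipliersTail_ternaryPath j)

theorem surjective_of_mem_multipliers (j : ℕ) : ∀ f ∈ multipliers j, Function.Surjective f := by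
  have surjective_id := Function.surjective_id (α := F₄)
  have surjective_mulω : Function.Surjective mulω := by decide
  have surjective_id_add_mulω : Function.Surjective (id + mulω) := by decide
  have surj_tail : ∀ f ∈ multipliersTail j, Function.Surjective f := by
    induction j with
    | zero => simp [multipliersTail, surjective_id, surjective_mulω, surjective_id_add_mulω]
    | succ j ih =>
      simpa [multipliersTail, surjective_id, surjective_mulω, surjective_id_add_mulω] using ih
  simpa [multipliers, surjective_id, surjective_id_add_mulω] using surj_tail

/-- The concatenation of four lifts of one sequence that starts with `x, b`, joined by the three
nonzero elements of `0 × 𝔽₄`. The lifts of `(1, 1)` and `(0, 1)` have their first two entries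
exchanged, so that their junction is at `b`; `r t` is what follows these two entries in the lift
of `t`. -/
def glue {V : Type*} [Zero V] (x b : V) (r : F₄ → List (V × F₄)) : List (V × F₄) :=
  let P t := (x, t) :: (b, t + mulω t) :: r t
  let Q t := (b, t + mulω t) :: (x, t) :: r t
  (P (0, 0)).reverse ++ (0, (1, 0)) :: (P (1, 0) ++ (0, (0, 1)) :: ((Q (1, 1)).reverse ++
    (0, (1, 1)) :: Q (0, 1)))

theorem glue_ternaryPath {V : Type*} [AddCommGroup V] [Module (ZMod 2) V] {x b y : V}
    {r : F₄ → List (V × F₄)}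
    (h : ∀ t, TernaryPath (x, t) (y, t) ((x, t) :: (b, t + mulω t) :: r t)) :
    TernaryPath (y, (0, 0)) (y, (0, 1)) (glue x b r) := by
  have junction (z : V) {a c d : F₄} (hacd : a + c + d = 0) :
      (z, a) + (0, c) + (z, d) = 0 := by
    rw [Prod.mk_add_mk, Prod.mk_add_mk, hacd, add_zero, ZModModule.add_self, Prod.mk_zero_zero]
  exact (h (0, 0)).reverse.append (junction x (by decide)) <|
    (h (1, 0)).append (junction y (by decide)) <|
    (h (1, 1)).swap.reverse.append (junction b (by decide)) (h (0, 1)).swap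

theorem length_glue {V : Type*} [Zero V] (x b : V) {r : F₄ → List (V × F₄)} {k : ℕ}
    (hr : ∀ t, (r t).length = k) : (glue x b r).length = 4 * (k + 2) + 3 := by
  simp only [glue, List.length_append, List.length_reverse, List.length_cons, hr]
  ring

theorem mem_glue {V : Type*} [Zero V] {x b : V} {r : F₄ → List (V × F₄)} {p : V × F₄} {t : F₄}
    (hp : p ∈ (x, t) :: (b, t + mulω t) :: r t) : p ∈ glue x b r := by
  have cases_F₄ : ∀ t : F₄, t = (0, 0) ∨ t = (1, 0) ∨ t = (0, 1) ∨ t = (1, 1) := by decide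
  simp only [List.mem_cons] at hp
  rcases cases_F₄ t with rfl | rfl | rfl | rfl <;>
    simp only [glue, List.mem_append, List.mem_reverse, List.mem_cons] <;> tauto

theorem zero_mk_mem_glue {V : Type*} [Zero V] {x b : V} {r : F₄ → List (V × F₄)} {c : F₄}
    (hc : c ≠ 0) : (0, c) ∈ glue x b r := by
  have cases_F₄ : ∀ c : F₄, c ≠ 0 → c = (1, 0) ∨ c = (0, 1) ∨ c = (1, 1) := by decide
  rcases cases_F₄ c hc with rfl | rfl | rfl <;> simp [glue]

theorem SequentiallyTernary.prod_F₄ {V : Type*} [AddCommGroup V] [Module (ZMod 2) V] [Finite V]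
    (h : SequentiallyTernary V) (hdvd : 4 ∣ Nat.card V) (hle : 8 ≤ Nat.card V) :
    SequentiallyTernary (V × F₄) := by
  obtain ⟨x, y, l, hl, nodup, mem⟩ := h
  have length_add_one := length_add_one_eq_card nodup mem
  obtain ⟨j, hj⟩ : ∃ j, l.length = (multipliers j).length := by
    obtain ⟨k, hk⟩ := hdvd
    refine ⟨k - 2, ?_⟩
    rw [multipliers, List.length_cons, List.length_cons, length_multipliersTail]
    omega
  have ternaryPath_lift := hl.liftPath (multipliers_ternaryPath j) hj
  have exists_mem_liftPath {z : V} (hz : z ∈ l) :=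
    exists_mem_liftPath hj (surjective_of_mem_multipliers j) hz
  cases hl with
  | single => simp [← length_add_one] at hle
  | @cons _ b _ _ l _ _ =>
    have glued := glue_ternaryPath (r := liftPath l (multipliersTail j)) ternaryPath_lift
    refine .of_length glued ?_ ?_
    · have length_tail (t : F₄) : (liftPath l (multipliersTail j) t).length = l.length := by
        simp only [multipliers, List.length_cons, add_left_inj] at hj
        simp [liftPath, hj]
      have card_F₄ : Nat.card F₄ = 4 := by simp
      rw [length_glue x b length_tail, Nat.card_prod, ← length_add_one, card_F₄, List.length_cons,
        List.length_cons]
      ring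
    · rintro ⟨z, c⟩ hzc
      obtain rfl | hz := eq_or_ne z 0
      · exact zero_mk_mem_glue fun hc => hzc (Prod.ext rfl hc)
      · obtain ⟨t, ht⟩ := exists_mem_liftPath ((mem z).2 hz) c
        exact mem_glue ht

theorem SequentiallyTernary.fin_add_two {n : ℕ} (hn : 3 ≤ n)
    (h : SequentiallyTernary (Fin n → ZMod 2)) : SequentiallyTernary (Fin (n + 2) → ZMod 2) := by
  have card_eq : Nat.card (Fin n → ZMod 2) = 2 ^ n := by simp
  have e : ((Fin n → ZMod 2) × F₄) ≃ₗ[ZMod 2] (Fin (n + 2) → ZMod 2) :=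
    LinearEquiv.ofFinrankEq _ _ (by simp)
  refine (h.prod_F₄ ?_ ?_).congr e.toAddEquiv
  · exact card_eq ▸ pow_dvd_pow 2 (show 2 ≤ n by omega)
  · exact card_eq ▸ Nat.pow_le_pow_right (n := 2) two_pos hn

/-- The sequence with entries `x` and `l` in odd positions, where each entry in an even position is
the sum of its neighbours; in characteristic two it is ternary. -/
def interleave {V : Type*} [Add V] (x : V) : List V → List V
  | [] => [x]
  | z :: l => x :: (x + z) :: interleave z l

theorem interleave_ternaryPath {V : Type*} [AddCommGroup V] [Module (ZMod 2) V] (x : V)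
    (l : List V) : ∃ y, TernaryPath x y (interleave x l) := by
  induction l generalizing x with
  | nil => exact ⟨x, .single x⟩
  | cons z l ih =>
    obtain ⟨y, hy⟩ := ih z
    refine ⟨y, .cons ?_ hy⟩
    rw [← add_assoc, ZModModule.add_self, zero_add, ZModModule.add_self]

theorem length_interleave {V : Type*} [Add V] (x : V) (l : List V) :
    (interleave x l).length = 2 * l.length + 1 := by
  induction l generalizing x with
  | nil => rfl
  | cons z l ih =>
    simp only [interleave, List.length_cons, ih]
    ring

theorem SequentiallyTernary.of_interleave {V : Type*} [AddCommGroup V] [Module (ZMod 2) V]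
    [Finite V] {x : V} {l : List V} (length_eq : 2 * l.length + 2 = Nat.card V)
    (mem : ∀ z ≠ 0, z ∈ interleave x l) : SequentiallyTernary V := by
  obtain ⟨y, hy⟩ := interleave_ternaryPath x l
  exact .of_length hy (by rw [length_interleave, ← length_eq]) mem

/-- The vector whose coordinates are the binary digits of `m`, lowest digit first. -/
def bits (n m : ℕ) : Fin n → ZMod 2 := fun i => if m.testBit i then 1 else 0

theorem SequentiallyTernary.fin_two : SequentiallyTernary (Fin 2 → ZMod 2) :=
  of_interleave (x := bits 2 1) (l := [3].map (bits 2)) (by simp) (by decide +kernel)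

-- The odd entries for dimensions five and six were found by computer search.
theorem SequentiallyTernary.fin_five : SequentiallyTernary (Fin 5 → ZMod 2) :=
  of_interleave (x := bits 5 1)
    (l := [28, 4, 30, 7, 21, 3, 9, 6, 8, 5, 17, 19, 12, 27, 11].map (bits 5))
    (by simp) (by decide +kernel)

theorem SequentiallyTernary.fin_six : SequentiallyTernary (Fin 6 → ZMod 2) :=
  of_interleave (x := bits 6 1)
    (l := [54, 2, 20, 59, 4, 13, 30, 50, 45, 8, 21, 36, 25, 18, 23, 53, 58, 16, 35, 32, 60, 38, 40,
      24, 57, 7, 41, 17, 10, 12, 39].map (bits 6))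
    (by simp) (by decide +kernel)

theorem SequentiallyTernary.fin_of_five_le (n : ℕ) (hn : 5 ≤ n) :
    SequentiallyTernary (Fin n → ZMod 2) := by
  induction n using Nat.strong_induction_on with
  | _ n ih =>
    match n, hn with
    | 5, _ => exact fin_five
    | 6, _ => exact fin_six
    | n + 7, _ => exact (ih (n + 5) (by omega) (by omega)).fin_add_two (by omega)

theorem stmt12 (n : ℕ) (hn : 2 ≤ n) : SeqTernary n ↔ (n ≠ 3 ∧ n ≠ 4) := by
  constructor
  · intro h
    exact ⟨fun h₃ => not_seqTernary_three (h₃ ▸ h), fun h₄ => not_seqTernary_four (h₄ ▸ h)⟩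
  · rintro ⟨h₃, h₄⟩
    obtain rfl | h₅ : n = 2 ∨ 5 ≤ n := by omega
    · exact SequentiallyTernary.fin_two.seqTernary
    · exact (SequentiallyTernary.fin_of_five_le n h₅).seqTernary
end

section
/- For any integers n ≥ 6 with n even, (ℤ/2ℤ)^n is sequentially ternary. -/
/-!
Let `K = {0, 1, ω, 1 + ω}` be the field with four elements. Attach to the entries of a ternary
enumeration of the nonzero elements of `G` nonzero weights in `K` that themselves form a ternary
list. Multiplying the weights by each `t ∈ K` gives four ternary lists in `G × K`, which together
contain every `(g, s)` with `g ≠ 0` once. Traversed alternately backwards and forwards, consecutive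
copies meet at the same `g`, so a connecting element `(0, s)` fits between them. A ternary list
stays ternary when its first two entries are exchanged; doing this in the last two copies, with
weights `1, ω` at the start and `1` at the end, makes the three connecting elements run through
`(0, s)`, `s ≠ 0`. Thus an enumeration for dimension `n` yields one for dimension `n + 2`.
-/

section IsTernary

variable {G H : Type*} [AddCommMonoid G] [AddCommMonoid H]

/-- A ternary list `[v₁, …, v₂ₖ₊₁]`: `vᵢ₋₁ + vᵢ + vᵢ₊₁ = 0` for every even `i`. -/
inductive IsTernary : List G → Prop
  | singleton (a : G) : IsTernary [a]
  | cons_cons {a b c : G} {l : List G} (h : a + b + c = 0) (hl : IsTernary (c :: l)) :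
    IsTernary (a :: b :: c :: l)

namespace IsTernary

theorem getD_add_getD_add_getD {l : List G} (hl : IsTernary l) {k : ℕ}
    (hk : 2 * k + 2 < l.length) :
    l.getD (2 * k) 0 + l.getD (2 * k + 1) 0 + l.getD (2 * k + 2) 0 = 0 := by
  induction hl generalizing k with
  | singleton a => simp at hk
  | cons_cons h _ ih =>
    cases k with
    | zero => simpa using h
    | succ k => exact ih (by simp only [List.length_cons] at hk ⊢; lia)

theorem map (f : G →+ H) {l : List G} (hl : IsTernary l) : IsTernary (l.map f) := by
  induction hl with
  | singleton a => exact .singleton _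
  | cons_cons h _ ih => exact .cons_cons (by simp [← map_add, h]) ih

theorem zip {l : List G} {w : List H} (hl : IsTernary l) (hw : IsTernary w)
    (hlen : l.length = w.length) : IsTernary (l.zip w) := by
  induction hl generalizing w with
  | singleton a =>
    cases hw with
    | singleton b => exact .singleton _
    | cons_cons => simp at hlen
  | cons_cons h _ ih =>
    cases hw with
    | singleton b => simp at hlen
    | cons_cons h' hw => exact .cons_cons (Prod.ext h h') (ih hw (by simpa using hlen))

theorem append {l₁ l₂ : List G} {a b c : G} (h₁ : IsTernary l₁) (h₂ : IsTernary l₂)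
    (ha : l₁.getLast? = some a) (hc : l₂.head? = some c) (h : a + b + c = 0) :
    IsTernary (l₁ ++ b :: l₂) := by
  induction h₁ with
  | singleton x =>
    obtain ⟨t, rfl⟩ := List.head?_eq_some_iff.mp hc
    obtain rfl : x = a := by simpa using ha
    exact .cons_cons h h₂
  | cons_cons h' _ ih => exact .cons_cons h' (ih (by simpa using ha))

theorem reverse {l : List G} (hl : IsTernary l) : IsTernary l.reverse := by
  induction hl with
  | singleton a => exact .singleton a
  | @cons_cons a b c l h _ ih =>
    have hcba : c + b + a = 0 := by rw [← h]; abel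
    simpa using ih.append (.singleton a) (List.getLast?_reverse) rfl hcba

theorem swap {a b : G} {l : List G} (hl : IsTernary (a :: b :: l)) :
    IsTernary (b :: a :: l) := by
  cases hl with
  | cons_cons h hl => exact .cons_cons (by rwa [add_comm b a]) hl

end IsTernary

/-- An arrangement of the nonzero elements of a finite group into a ternary list. Prescribing the
length is an economical way of excluding `0` and repetitions. -/
structure IsTernaryEnumeration (l : List G) : Prop where
  isTernary : IsTernary l
  mem_of_ne_zero : ∀ x ≠ 0, x ∈ l
  length_add_one : l.length + 1 = Nat.card G

namespace IsTernaryEnumeration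

theorem map (e : G ≃+ H) {l : List G} (hl : IsTernaryEnumeration l) :
    IsTernaryEnumeration (l.map e) where
  isTernary := hl.isTernary.map e.toAddMonoidHom
  mem_of_ne_zero x hx :=
    List.mem_map.mpr ⟨e.symm x, hl.mem_of_ne_zero _ (by simpa using hx), e.apply_symm_apply x⟩
  length_add_one := by rw [List.length_map, hl.length_add_one, Nat.card_congr e.toEquiv]

theorem nodup_zero_cons {l : List G} (hl : IsTernaryEnumeration l) : (0 :: l).Nodup := by
  have : Finite G := Nat.finite_of_card_ne_zero (by rw [← hl.length_add_one]; simp)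
  have hsurj : Function.Surjective (0 :: l).get := by
    intro x
    rw [← Set.mem_range, Set.range_list_get]
    by_cases hx : x = 0
    · simp [hx]
    · exact List.mem_cons_of_mem _ (hl.mem_of_ne_zero x hx)
  exact List.nodup_iff_injective_get.mpr
    (hsurj.bijective_of_nat_card_le (by simp [hl.length_add_one])).injective

theorem bijOn_getD {l : List G} (hl : IsTernaryEnumeration l) :
    Set.BijOn (fun i ↦ l.getD (i - 1) 0) (Set.Icc 1 (Nat.card G - 1)) {x | x ≠ 0} := by
  have hlen : Nat.card G - 1 = l.length := by rw [← hl.length_add_one, Nat.add_sub_cancel]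
  obtain ⟨hzero, hnodup⟩ := List.nodup_cons.mp hl.nodup_zero_cons
  have hget {i : ℕ} (hi : i ∈ Set.Icc 1 l.length) :
      ∃ h : i - 1 < l.length, l.getD (i - 1) 0 = l[i - 1] := by
    have h : i - 1 < l.length := by have := hi.1; have := hi.2; lia
    exact ⟨h, List.getD_eq_getElem _ _ h⟩
  rw [hlen]
  refine ⟨fun i hi ↦ ?_, fun i hi j hj hij ↦ ?_, fun x hx ↦ ?_⟩
  · obtain ⟨h, hi⟩ := hget hi
    exact ne_of_eq_of_ne hi (ne_of_mem_of_not_mem (List.getElem_mem h) hzero)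
  · obtain ⟨_, hi'⟩ := hget hi
    obtain ⟨_, hj'⟩ := hget hj
    have : i - 1 = j - 1 := hnodup.getElem_inj_iff.mp (by simpa only [hi', hj'] using hij)
    have := hi.1
    have := hj.1
    lia
  · obtain ⟨i, hi, rfl⟩ := List.getElem_of_mem (hl.mem_of_ne_zero x hx)
    exact ⟨i + 1, ⟨by lia, by lia⟩, List.getD_eq_getElem _ _ hi⟩

theorem seqTernary {n : ℕ} {l : List (Fin n → ZMod 2)} (hl : IsTernaryEnumeration l) :
    SeqTernary n := by
  have hcard : Nat.card (Fin n → ZMod 2) = 2 ^ n := by simp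
  refine ⟨fun i ↦ l.getD (i - 1) 0, hcard ▸ hl.bijOn_getD, fun i hi hi' heven ↦ ?_⟩
  obtain ⟨k, rfl⟩ : ∃ k, i = 2 * k + 2 := by
    obtain ⟨m, rfl⟩ := heven
    exact ⟨m - 1, by lia⟩
  have hlen := hl.length_add_one
  rw [hcard] at hlen
  exact hl.isTernary.getD_add_getD_add_getD (by lia)

end IsTernaryEnumeration

end IsTernary

theorem eight_dvd_natCard {G : Type*} [AddCommGroup G] [Module (ZMod 2) G]
    (hG : 4 < Nat.card G) : 8 ∣ Nat.card G := by
  have : Finite G := Nat.finite_of_card_ne_zero (by lia)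
  have hpow : Nat.card G = 2 ^ Module.finrank (ZMod 2) G := by
    rw [Module.natCard_eq_pow_finrank (K := ZMod 2), Nat.card_zmod]
  rw [hpow] at hG ⊢
  exact pow_dvd_pow 2 (m := 3) ((Nat.pow_lt_pow_iff_right (n := 2) one_lt_two).mp hG)

section Weights

variable {K : Type*} [Field K] [CharP K 2]

theorem exists_forall_eq_of_card_eq_four (hK : Nat.card K = 4) :
    ∃ ω : K, ω ≠ 0 ∧ ω ≠ 1 ∧ ∀ s : K, s = 0 ∨ s = 1 ∨ s = ω ∨ s = 1 + ω := by
  classical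
  have : Finite K := Nat.finite_of_card_ne_zero (by rw [hK]; simp)
  have := Fintype.ofFinite K
  rw [Nat.card_eq_fintype_card] at hK
  obtain ⟨ω, hω⟩ : ∃ ω : K, ω ∉ ({0, 1} : Finset K) := by
    by_contra! h
    have := Finset.card_le_two (a := (0 : K)) (b := 1)
    rw [Finset.eq_univ_of_forall h, Finset.card_univ] at this
    lia
  obtain ⟨hω₀, hω₁⟩ : ω ≠ 0 ∧ ω ≠ 1 := by simpa using hω
  have huniv : ({0, 1, ω, 1 + ω} : Finset K) = Finset.univ := by
    apply Finset.eq_univ_of_card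
    have : 1 + ω ≠ 0 := fun h ↦ hω₁ (CharTwo.add_eq_zero.mp h).symm
    rw [hK]
    simp [Finset.card_insert_of_notMem, hω₀, hω₁.symm, hω₀.symm, this.symm]
  have hmem (s : K) : s ∈ ({0, 1, ω, 1 + ω} : Finset K) := huniv ▸ Finset.mem_univ s
  exact ⟨ω, hω₀, hω₁, by simpa only [Finset.mem_insert, Finset.mem_singleton] using hmem⟩

theorem exists_isTernary_weights {ω : K} (hω₀ : ω ≠ 0) (hω₁ : ω ≠ 1) (k : ℕ) :
    ∃ w : List K, IsTernary (1 :: ω :: (1 + ω) :: w) ∧ w.getLast? = some 1 ∧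
      0 ∉ 1 :: ω :: (1 + ω) :: w ∧ w.length = 4 * (k + 1) := by
  have hsum : 1 + ω + (1 + ω) = 0 := CharTwo.add_self_eq_zero _
  have hsum' : 1 + ω + 1 + ω = 0 := by rw [add_assoc, hsum]
  have hsum'' : ω + (1 + ω) + 1 = 0 := by rw [← hsum]; ring
  have hne : 0 ≠ 1 + ω := fun h ↦ hω₁ (CharTwo.add_eq_zero.mp h.symm).symm
  induction k with
  | zero =>
    refine ⟨[1, ω, 1 + ω, 1], ?_, rfl, by simp [hω₀.symm, hne], rfl⟩
    exact .cons_cons hsum (.cons_cons hsum' (.cons_cons hsum'' (.singleton 1)))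
  | succ k ih =>
    obtain ⟨w, hw, hlast, hzero, hlen⟩ := ih
    refine ⟨ω :: 1 :: ω :: (1 + ω) :: w, ?_, by simp [List.getLast?_cons, hlast],
      by simpa [hω₀.symm] using hzero, by simp only [List.length_cons]; lia⟩
    exact .cons_cons hsum (.cons_cons (by rw [← hsum']; ring) hw)

end Weights

section Product

variable {G K : Type*} [AddCommGroup G] [Field K]

/-- Multiplication by `t` on the second coordinate of `G × K`. It produces the several copies in
`G × K` of one list with weights in `K`. -/
def scaleSnd (G : Type*) [AddCommGroup G] (t : K) : G × K →+ G × K :=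
  (AddMonoidHom.id G).prodMap (AddMonoidHom.mulLeft t)

theorem scaleSnd_apply (t : K) (x : G × K) : scaleSnd G t x = (x.1, t * x.2) := rfl

theorem scaleSnd_add_add_scaleSnd [Module (ZMod 2) G] {t t' r s : K}
    (h : t * r + s + t' * r = 0) (g : G) :
    scaleSnd G t (g, r) + (0, s) + scaleSnd G t' (g, r) = 0 :=
  Prod.ext (by simp [scaleSnd_apply, ZModModule.add_self]) h

/-- The arrangement of `G × K`, for a field `K = {0, 1, ω, 1 + ω}`, built from a list
`p :: q :: l` whose first coordinates enumerate the nonzero elements of `G`. Exchanging `p` and `q`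
in the last two copies makes the third connecting weight `ω` instead of a second `1`. -/
def gluedCopies (ω : K) (p q : G × K) (l : List (G × K)) : List (G × K) :=
  (((p :: q :: l).map (scaleSnd G 0)).reverse ++ (0, 1) :: (p :: q :: l).map (scaleSnd G 1)) ++
    (0, 1 + ω) :: (((q :: p :: l).map (scaleSnd G ω)).reverse ++
      (0, ω) :: (q :: p :: l).map (scaleSnd G (1 + ω)))

theorem length_gluedCopies (ω : K) (p q : G × K) (l : List (G × K)) :
    (gluedCopies ω p q l).length = 4 * l.length + 11 := by
  simp only [gluedCopies, List.length_append, List.length_cons, List.length_reverse,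
    List.length_map]
  lia

theorem mem_gluedCopies {ω : K} (hK : ∀ s : K, s = 0 ∨ s = 1 ∨ s = ω ∨ s = 1 + ω)
    {p q : G × K} {l : List (G × K)} (hne : ∀ x ∈ p :: q :: l, x.2 ≠ 0)
    (hmem : ∀ g ≠ 0, g ∈ (p :: q :: l).map Prod.fst) {x : G × K} (hx : x ≠ 0) :
    x ∈ gluedCopies ω p q l := by
  obtain ⟨g, s⟩ := x
  by_cases hg : g = 0
  · subst hg
    have hs : s ≠ 0 := by rintro rfl; exact hx rfl
    rcases hK s with rfl | rfl | rfl | rfl <;> simp_all [gluedCopies]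
  · obtain ⟨⟨g, r⟩, hr, rfl⟩ := List.mem_map.mp (hmem g hg)
    have hscale : scaleSnd G (s / r) (g, r) = (g, s) := by
      rw [scaleSnd_apply, div_mul_cancel₀ s (hne _ hr)]
    have hcopy : (g, s) ∈ (p :: q :: l).map (scaleSnd G (s / r)) :=
      List.mem_map.mpr ⟨_, hr, hscale⟩
    have hcopy' : (g, s) ∈ (q :: p :: l).map (scaleSnd G (s / r)) :=
      ((List.Perm.swap q p l).map _).mem_iff.mp hcopy
    rcases hK (s / r) with h | h | h | h <;> rw [h] at hcopy hcopy' <;>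
      simp only [gluedCopies, List.mem_append, List.mem_cons, List.mem_reverse, hcopy, hcopy',
        true_or, or_true]

variable [CharP K 2]

theorem IsTernary.gluedCopies [Module (ZMod 2) G] {ω : K} {a b c : G} {l : List (G × K)}
    (hl : IsTernary ((a, 1) :: (b, ω) :: l)) (hlast : l.getLast? = some (c, 1)) :
    IsTernary (gluedCopies ω (a, 1) (b, ω) l) := by
  have hcopy (t : K) := hl.map (scaleSnd G t)
  have hcopy' (t : K) := hl.swap.map (scaleSnd G t)
  have hone : (1 : K) + 1 = 0 := CharTwo.add_self_eq_zero 1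
  have hleft := (hcopy 0).reverse.append (hcopy 1) List.getLast?_reverse rfl
    (scaleSnd_add_add_scaleSnd (s := 1) (by linear_combination hone) a)
  have hright := (hcopy' ω).reverse.append (hcopy' (1 + ω)) List.getLast?_reverse rfl
    (scaleSnd_add_add_scaleSnd (s := ω) (by linear_combination (ω + ω ^ 2) * hone) b)
  have hjoin : scaleSnd G 1 (c, 1) + (0, 1 + ω) + scaleSnd G ω (c, 1) = 0 :=
    scaleSnd_add_add_scaleSnd (by linear_combination (1 + ω) * hone) c
  exact hleft.append hright (by simp [List.getLast?_cons, hlast]) (by simp [hlast]) hjoin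

theorem exists_weighted_list {ω : K} (hω₀ : ω ≠ 0) (hω₁ : ω ≠ 1) {a b : G} {l : List G} {k : ℕ}
    (hl : IsTernary (a :: b :: l)) (hlen : l.length = 4 * k + 5) :
    ∃ m : List (G × K), m.map Prod.fst = l ∧ IsTernary ((a, 1) :: (b, ω) :: m) ∧
      (∀ x ∈ (a, 1) :: (b, ω) :: m, x.2 ≠ 0) ∧ ∃ c, m.getLast? = some (c, 1) := by
  obtain ⟨w, hw, hlast, hzero, hwlen⟩ := exists_isTernary_weights hω₀ hω₁ k
  have hlen' : l.length = ((1 + ω) :: w).length := by rw [List.length_cons]; lia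
  have hsnd : (l.zip ((1 + ω) :: w)).map Prod.snd = (1 + ω) :: w := List.map_snd_zip hlen'.ge
  refine ⟨l.zip ((1 + ω) :: w), List.map_fst_zip hlen'.le, hl.zip hw (by simp [hlen']), ?_, ?_⟩
  · intro x hx hx₀
    have := List.mem_map_of_mem (f := Prod.snd) hx
    rw [List.map_cons, List.map_cons, hsnd, hx₀] at this
    exact hzero this
  · have : (l.zip ((1 + ω) :: w)).getLast?.map Prod.snd = some 1 := by
      rw [← List.getLast?_map, hsnd, List.getLast?_cons, hlast, Option.getD_some]
    obtain ⟨⟨c, _⟩, hc, rfl⟩ := Option.map_eq_some_iff.mp this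
    exact ⟨c, hc⟩

theorem IsTernaryEnumeration.exists_prod [Module (ZMod 2) G] (hK : Nat.card K = 4)
    (hG : 4 < Nat.card G) {l : List G} (hl : IsTernaryEnumeration l) :
    ∃ l' : List (G × K), IsTernaryEnumeration l' := by
  obtain ⟨j, hj⟩ := eight_dvd_natCard hG
  obtain ⟨k, hk⟩ : ∃ k, Nat.card G = 4 * k + 8 := ⟨2 * (j - 1), by lia⟩
  obtain ⟨ht, hmem, hlen⟩ := hl
  have hlen₂ : 2 ≤ l.length := by lia
  obtain ⟨a, b, l, rfl⟩ : ∃ a b m, l = a :: b :: m := by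
    match l with
    | a :: b :: m => exact ⟨a, b, m, rfl⟩
  simp only [List.length_cons] at hlen
  obtain ⟨ω, hω₀, hω₁, hω⟩ := exists_forall_eq_of_card_eq_four hK
  obtain ⟨m, rfl, hm, hne, c, hc⟩ := exists_weighted_list hω₀ hω₁ ht (k := k) (by lia)
  refine ⟨gluedCopies ω (a, 1) (b, ω) m, hm.gluedCopies hc,
    fun x ↦ mem_gluedCopies hω hne hmem, ?_⟩
  rw [List.length_map] at hlen
  rw [length_gluedCopies, Nat.card_prod, hK]
  lia

end Product

theorem IsTernaryEnumeration.exists_pi_add_two {n : ℕ} (hn : 2 < n) {l : List (Fin n → ZMod 2)}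
    (hl : IsTernaryEnumeration l) :
    ∃ l' : List (Fin (n + 2) → ZMod 2), IsTernaryEnumeration l' := by
  have hK : Nat.card (GaloisField 2 2) = 4 := GaloisField.card 2 2 two_ne_zero
  have hG : 4 < Nat.card (Fin n → ZMod 2) := by
    simpa using Nat.pow_lt_pow_right one_lt_two hn
  have hrank : Module.finrank (ZMod 2) ((Fin n → ZMod 2) × GaloisField 2 2) =
      Module.finrank (ZMod 2) (Fin (n + 2) → ZMod 2) := by
    rw [Module.finrank_prod, GaloisField.finrank 2 two_ne_zero, Module.finrank_fin_fun,
      Module.finrank_fin_fun]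
  obtain ⟨l', hl'⟩ := hl.exists_prod hK hG
  exact ⟨_, hl'.map (LinearEquiv.ofFinrankEq _ _ hrank).toAddEquiv⟩

section Base

/-- The list with the given entries in its odd positions and the sums of neighbours between. -/
def interleaveSums {G : Type*} [Add G] : List G → List G
  | [] => []
  | [a] => [a]
  | a :: b :: l => a :: (a + b) :: interleaveSums (b :: l)

theorem isTernary_interleaveSums {G : Type*} [AddCommGroup G] [Module (ZMod 2) G] (a : G)
    (l : List G) : IsTernary (interleaveSums (a :: l)) := by
  induction l generalizing a with
  | nil => exact .singleton a
  | cons b l ih =>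
    have hsum : a + (a + b) + b = 0 := by
      rw [← add_assoc, ZModModule.add_self, zero_add, ZModModule.add_self]
    cases l <;> exact .cons_cons hsum (ih b)

/-- The vector of binary digits of `m`, a compact notation for the elements of `(ℤ/2ℤ)^6`. -/
def binaryDigits (m : ℕ) : Fin 6 → ZMod 2 := fun k ↦ if m.testBit k then 1 else 0

/-- An arrangement of the nonzero elements of `(ℤ/2ℤ)^6`, found by computer. It was searched for
among the lists with `vᵢ₊₁₄ = X * vᵢ` in `𝔽₂[X]/(X⁶ + X³ + 1)`, where `X` has order `9` and binary
digits are read as coefficients: each row of the table is `X` times the one above. -/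
def baseList : List (Fin 6 → ZMod 2) :=
  interleaveSums ([ 1, 39,  6, 51, 42, 27, 34,
                    2,  7, 12, 47, 29, 54, 13,
                    4, 14, 24, 23, 58, 37, 26,
                    8, 28, 48, 46, 61,  3, 52,
                   16, 56, 41, 21].map binaryDigits)

theorem isTernaryEnumeration_baseList : IsTernaryEnumeration baseList where
  isTernary := isTernary_interleaveSums _ _
  mem_of_ne_zero := by decide +kernel
  length_add_one := by simp [baseList, interleaveSums]

end Base

theorem exists_isTernaryEnumeration (k : ℕ) :
    ∃ l : List (Fin (6 + 2 * k) → ZMod 2), IsTernaryEnumeration l := by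
  induction k with
  | zero => exact ⟨baseList, isTernaryEnumeration_baseList⟩
  | succ k ih =>
    obtain ⟨l, hl⟩ := ih
    exact hl.exists_pi_add_two (by lia)

theorem stmt18 (n : ℕ) (hn : 6 ≤ n) (heven : Even n) : SeqTernary n := by
  obtain ⟨m, rfl⟩ := heven
  obtain ⟨k, hk⟩ : ∃ k, m + m = 6 + 2 * k := ⟨m - 3, by lia⟩
  obtain ⟨l, hl⟩ := exists_isTernaryEnumeration k
  exact hk ▸ hl.seqTernary
end
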